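/- arXiv:math/9510204 — 7 statements merged into one kernel-verified Lean document; each statement's English description precedes it below -/
import Mathlib

section
/- The function D is invariant under the simultaneous homographic action of G on H × H: for every g ∈ GL(2,F) and all z, w ∈ H, one has N(g·z − g·w) · N(z − w̄) = N(z − w) · N(g·z − conj(g·w)), where conj denotes the conjugation x ↦ x̄ of E over F (this is the identity D(g·z, g·w) = D(z,w) written without denominators, so that the convention D(z,w) = ∞ for w = z̄ is handled). -/
/-- Conjugation `x ↦ x^q` of the quadratic extension `E` of the field `F`
with `q` elements. -/
def conjE (F : Type) [Fintype F] {E : Type} [Monoid E] (z : E) : E :=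
  z ^ (Fintype.card F)

/-- The norm `N(z) = z ⬝ z̄` of `E` over `F`. -/
def normE (F : Type) [Fintype F] {E : Type} [Monoid E] (z : E) : E :=
  z * conjE F z

/-- The homographic (Möbius) action of `GL(2,F)` on the finite upper
half-plane `H = E ∖ F`. -/
noncomputable def mobius (F : Type) [Field F] {E : Type} [Field E] [Algebra F E]
    (g : Matrix.GeneralLinearGroup (Fin 2) F) (z : E) : E :=
  (algebraMap F E ((g : Matrix (Fin 2) (Fin 2) F) 0 0) * z
      + algebraMap F E ((g : Matrix (Fin 2) (Fin 2) F) 0 1)) /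
  (algebraMap F E ((g : Matrix (Fin 2) (Fin 2) F) 1 0) * z
      + algebraMap F E ((g : Matrix (Fin 2) (Fin 2) F) 1 1))

theorem mobius_den_ne (F E : Type) [Field F] [Field E] [Algebra F E]
    (g : Matrix.GeneralLinearGroup (Fin 2) F) (z : E)
    (hz : z ∉ Set.range (algebraMap F E)) :
    algebraMap F E ((g : Matrix (Fin 2) (Fin 2) F) 1 0) * z
      + algebraMap F E ((g : Matrix (Fin 2) (Fin 2) F) 1 1) ≠ 0 := by
  intro h
  have hdet : (g : Matrix (Fin 2) (Fin 2) F).det ≠ 0 := by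
    have := (Matrix.isUnit_iff_isUnit_det _).1 g.isUnit
    exact this.ne_zero
  rw [Matrix.det_fin_two] at hdet
  by_cases hc : (g : Matrix (Fin 2) (Fin 2) F) 1 0 = 0
  · rw [hc, map_zero, zero_mul, zero_add] at h
    have hd := (map_eq_zero (algebraMap F E)).1 h
    apply hdet
    rw [hc, hd]
    ring
  · apply hz
    refine ⟨-(g : Matrix (Fin 2) (Fin 2) F) 1 1 / (g : Matrix (Fin 2) (Fin 2) F) 1 0, ?_⟩
    have hc' := (map_ne_zero (algebraMap F E)).2 hc
    rw [map_div₀, map_neg, div_eq_iff hc']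
    linear_combination -h

/-- **Invariance of `D`** : the function `D(z,w) = N(z−w)/N(z−w̄)` is invariant
under the simultaneous homographic action of `GL(2,F)` on `H × H`, written in
cross-multiplied form. -/
theorem D_invariant_under_homographic_action
    (F E : Type) [Field F] [Fintype F] [Field E] [Fintype E] [Algebra F E]
    (hdim : Module.finrank F E = 2)
    (g : Matrix.GeneralLinearGroup (Fin 2) F) (z w : E)
    (hz : z ∉ Set.range (algebraMap F E)) (hw : w ∉ Set.range (algebraMap F E)) :
    normE F (mobius F g z - mobius F g w) * normE F (z - conjE F w)
      = normE F (z - w) * normE F (mobius F g z - conjE F (mobius F g w)) := by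
  have hσ : ∀ x : E, conjE F x = FiniteField.frobeniusAlgHom F E x := fun x => rfl
  have hinv : ∀ x : E, FiniteField.frobeniusAlgHom F E (FiniteField.frobeniusAlgHom F E x) = x := by
    intro x
    have hcard : Fintype.card E = Fintype.card F ^ 2 := by
      rw [← hdim]; exact Module.card_eq_pow_finrank
    rw [← hσ, ← hσ]
    unfold conjE
    rw [← pow_mul, ← pow_two, ← hcard, FiniteField.pow_card]
  have h1 := mobius_den_ne F E g z hz
  have h2 := mobius_den_ne F E g w hw
  have h3 := (map_ne_zero (FiniteField.frobeniusAlgHom F E)).2 h1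
  have h4 := (map_ne_zero (FiniteField.frobeniusAlgHom F E)).2 h2
  unfold normE mobius
  simp only [hσ, map_sub, map_div₀, map_add, map_mul, AlgHom.commutes, hinv] at h3 h4 ⊢
  generalize FiniteField.frobeniusAlgHom F E z = z' at *
  generalize FiniteField.frobeniusAlgHom F E w = w' at *
  generalize algebraMap F E ((g : Matrix (Fin 2) (Fin 2) F) 0 0) = a at *
  generalize algebraMap F E ((g : Matrix (Fin 2) (Fin 2) F) 0 1) = b at *
  generalize algebraMap F E ((g : Matrix (Fin 2) (Fin 2) F) 1 0) = c at *
  generalize algebraMap F E ((g : Matrix (Fin 2) (Fin 2) F) 1 1) = d at *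
  have key : ∀ x y : E, c * x + d ≠ 0 → c * y + d ≠ 0 →
      (a * x + b) / (c * x + d) - (a * y + b) / (c * y + d)
        = (a * d - b * c) * (x - y) / ((c * x + d) * (c * y + d)) := by
    intro x y hx hy
    rw [div_sub_div _ _ hx hy]
    congr 1
    ring
  rw [key z w h1 h2, key z' w' h3 h4, key z w' h1 h4, key z' w h3 h2]
  field_simp
end

section
/- D classifies the orbits of the homographic action of G on H × H: two pairs (z,w) and (z',w') in H × H lie in the same G-orbit (i.e. there exists g ∈ GL(2,F) with g·z = z' and g·w = w') if and only if N(z − w) · N(z' − conj(w')) = N(z' − w') · N(z − w̄), where conj denotes the conjugation x ↦ x̄ of E over F (this cross-multiplied equality expresses D(z,w) = D(z',w') including the convention about the value ∞). -/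
theorem fixed_mem (F E : Type) [Field F] [Fintype F] [Field E] [Algebra F E]
    (x : E) (hx : x ^ Fintype.card F = x) : x ∈ Set.range (algebraMap F E) := by
  classical
  by_contra hn
  have hq : 1 < Fintype.card F := Fintype.one_lt_card
  have h0 := FiniteField.X_pow_card_sub_X_ne_zero E hq
  have hsub : insert x (Finset.univ.image (algebraMap F E)) ⊆
      (Polynomial.X ^ Fintype.card F - Polynomial.X : Polynomial E).roots.toFinset := by
    intro y hy
    rw [Multiset.mem_toFinset, Polynomial.mem_roots h0]
    rcases Finset.mem_insert.1 hy with rfl | hy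
    · simp [Polynomial.IsRoot, hx]
    · obtain ⟨a, -, rfl⟩ := Finset.mem_image.1 hy
      simp [Polynomial.IsRoot, ← map_pow, FiniteField.pow_card]
  have h1 := Finset.card_le_card hsub
  rw [Finset.card_insert_of_notMem (by simpa using hn),
    Finset.card_image_of_injective _ (algebraMap F E).injective, Finset.card_univ] at h1
  have h2 := Multiset.toFinset_card_le
    (Polynomial.X ^ Fintype.card F - Polynomial.X : Polynomial E).roots
  have h3 := Polynomial.card_roots' (Polynomial.X ^ Fintype.card F - Polynomial.X : Polynomial E)
  rw [FiniteField.X_pow_card_sub_X_natDegree_eq E hq] at h3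
  omega

theorem exists_coords {F E : Type} [Field F] [Field E] [Algebra F E] (s : E →ₐ[F] E)
    (hs : ∀ x, s (s x) = x) (hfix : ∀ x, s x = x → x ∈ Set.range (algebraMap F E))
    (z : E) (hz : z - s z ≠ 0) (t : E) :
    ∃ a b : F, algebraMap F E a * z + algebraMap F E b = t := by
  have hz2 : s z - z ≠ 0 := by rw [← neg_sub]; exact neg_ne_zero.2 hz
  obtain ⟨a, ha⟩ := hfix ((t - s t) / (z - s z)) (by
    rw [map_div₀, map_sub, map_sub, hs, hs]
    rw [div_eq_div_iff hz2 hz]; ring)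
  have ha' : algebraMap F E a * (z - s z) = t - s t := by
    rw [ha, div_mul_cancel₀ _ hz]
  obtain ⟨b, hb⟩ := hfix (t - algebraMap F E a * z) (by
    rw [map_sub, map_mul, AlgHom.commutes]
    linear_combination ha')
  exact ⟨a, b, by rw [hb]; ring⟩

theorem denom_ne {F E : Type} [Field F] [Field E] [Algebra F E] (c d : F)
    (h : ¬ (c = 0 ∧ d = 0)) (w : E) (hw : w ∉ Set.range (algebraMap F E)) :
    algebraMap F E c * w + algebraMap F E d ≠ 0 := by
  intro h0
  by_cases hc : c = 0
  · subst hc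
    apply h
    refine ⟨rfl, ?_⟩
    simpa using h0
  · apply hw
    refine ⟨-d / c, ?_⟩
    have hc' : algebraMap F E c ≠ 0 := by simpa using hc
    rw [map_div₀, map_neg, div_eq_iff hc']
    linear_combination -h0

theorem main_aux {F E : Type} [Field F] [Field E] [Algebra F E] (s : E →ₐ[F] E)
    (hs : ∀ x, s (s x) = x) (hfix : ∀ x, s x = x → x ∈ Set.range (algebraMap F E))
    (z w z' w' : E)
    (hz : z ∉ Set.range (algebraMap F E)) (hw : w ∉ Set.range (algebraMap F E))
    (hz' : z' ∉ Set.range (algebraMap F E)) :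
    (∃ g : Matrix.GeneralLinearGroup (Fin 2) F,
        mobius F g z = z' ∧ mobius F g w = w')
      ↔ ((z - w) * s (z - w)) * ((z' - s w') * s (z' - s w'))
          = ((z' - w') * s (z' - w')) * ((z - s w) * s (z - s w)) := by
  simp only [map_sub, hs]
  have hzs : z - s z ≠ 0 := fun h => hz (hfix z (sub_eq_zero.1 h).symm)
  have hzs' : z' - s z' ≠ 0 := fun h => hz' (hfix z' (sub_eq_zero.1 h).symm)
  constructor
  · rintro ⟨g, h1, h2⟩
    have hdet : (g : Matrix (Fin 2) (Fin 2) F).det ≠ 0 := g.det_ne_zero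
    rw [Matrix.det_fin_two] at hdet
    unfold mobius at h1 h2
    generalize (g : Matrix (Fin 2) (Fin 2) F) 0 0 = a at *
    generalize (g : Matrix (Fin 2) (Fin 2) F) 0 1 = b at *
    generalize (g : Matrix (Fin 2) (Fin 2) F) 1 0 = c at *
    generalize (g : Matrix (Fin 2) (Fin 2) F) 1 1 = d at *
    have hcd : ¬ (c = 0 ∧ d = 0) := by
      rintro ⟨rfl, rfl⟩
      simp at hdet
    have hP := denom_ne c d hcd z hz
    have hQ := denom_ne c d hcd w hw
    have hsP := (map_ne_zero s).2 hP
    have hsQ := (map_ne_zero s).2 hQ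
    rw [div_eq_iff hP] at h1
    rw [div_eq_iff hQ] at h2
    have h3 := congrArg s h1
    have h4 := congrArg s h2
    simp only [map_add, map_mul, AlgHom.commutes] at h3 h4 hsP hsQ
    generalize algebraMap F E a = a at *
    generalize algebraMap F E b = b at *
    generalize algebraMap F E c = c at *
    generalize algebraMap F E d = d at *
    generalize s z = zb at *
    generalize s w = wb at *
    generalize s z' = zb' at *
    generalize s w' = wb' at *
    have e1 : (z' - w') * ((c * z + d) * (c * w + d)) = (a * d - b * c) * (z - w) := by
      linear_combination (-(c * w + d)) * h1 + (c * z + d) * h2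
    have e2 : (zb' - wb') * ((c * zb + d) * (c * wb + d)) = (a * d - b * c) * (zb - wb) := by
      linear_combination (-(c * wb + d)) * h3 + (c * zb + d) * h4
    have e3 : (z' - wb') * ((c * z + d) * (c * wb + d)) = (a * d - b * c) * (z - wb) := by
      linear_combination (-(c * wb + d)) * h1 + (c * z + d) * h4
    have e4 : (zb' - w') * ((c * zb + d) * (c * w + d)) = (a * d - b * c) * (zb - w) := by
      linear_combination (-(c * w + d)) * h3 + (c * zb + d) * h2
    have hK : (c * z + d) * (c * w + d) * ((c * zb + d) * (c * wb + d)) ≠ 0 :=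
      mul_ne_zero (mul_ne_zero hP hQ) (mul_ne_zero hsP hsQ)
    apply mul_right_cancel₀ hK
    calc _ = (z - w) * (zb - wb) * (((z' - wb') * ((c * z + d) * (c * wb + d))) *
              ((zb' - w') * ((c * zb + d) * (c * w + d)))) := by ring
      _ = ((a * d - b * c) * (z - w)) * ((a * d - b * c) * (zb - wb)) *
            ((z - wb) * (zb - w)) := by rw [e3, e4]; ring
      _ = _ := by rw [← e1, ← e2]; ring
  · intro h
    -- Hilbert 90
    obtain ⟨l, hl, hlAB⟩ : ∃ l : E, l ≠ 0 ∧
        l * ((z' - w') * (w - s z)) = s l * ((s z' - w') * (w - z)) := by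
      set A := (z' - w') * (w - s z) with hA
      set B := (s z' - w') * (w - z) with hB
      have hN : A * s A = B * s B := by
        simp only [hA, hB, map_mul, map_sub, hs]
        linear_combination -h
      by_cases hB0 : B = 0
      · refine ⟨1, one_ne_zero, ?_⟩
        rw [hB0, map_zero, mul_zero] at hN
        have : A = 0 := by
          rcases mul_eq_zero.1 hN with h | h
          · exact h
          · exact (map_eq_zero s).1 h
        rw [this, hB0]; simp
      · have hsB : s B ≠ 0 := (map_ne_zero s).2 hB0
        -- l = x * s B + s x * s A works up to scaling
        have key : ∀ x : E, (x + s x * (s A / s B)) * A = s (x + s x * (s A / s B)) * B := by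
          intro x
          simp only [map_add, map_mul, map_div₀, hs]
          field_simp
          linear_combination (s x) * hN
        by_cases h1 : 1 + s A / s B = 0
        · refine ⟨z + s z * (s A / s B), ?_, key z⟩
          have : s A / s B = -1 := by linear_combination h1
          rw [this]
          intro h0; apply hzs; linear_combination h0
        · refine ⟨1 + s 1 * (s A / s B), ?_, key 1⟩
          simpa using h1
    obtain ⟨a, b, hab⟩ := exists_coords s hs hfix z hzs (l * z')
    obtain ⟨c, d, hcd⟩ := exists_coords s hs hfix z hzs l
    have hab' := congrArg s hab
    have hcd' := congrArg s hcd
    simp only [map_add, map_mul, AlgHom.commutes] at hab' hcd'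
    have hsl : s l ≠ 0 := (map_ne_zero s).2 hl
    have hdet : (!![a, b; c, d] : Matrix (Fin 2) (Fin 2) F).det ≠ 0 := by
      rw [Matrix.det_fin_two_of]
      intro h0
      have h1 := congrArg (algebraMap F E) h0
      simp only [map_sub, map_mul, map_zero] at h1
      have : l * s l * (z' - s z') = 0 := by
        linear_combination (z - s z) * h1 - s l * hab + l * hab'
          - (algebraMap F E a * z + algebraMap F E b) * hcd'
          + (algebraMap F E a * s z + algebraMap F E b) * hcd
      exact mul_ne_zero (mul_ne_zero hl hsl) hzs' this
    have hcd0 : ¬ (c = 0 ∧ d = 0) := by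
      rintro ⟨rfl, rfl⟩
      apply hl; rw [← hcd]; simp
    have hQ := denom_ne c d hcd0 w hw
    refine ⟨Matrix.GeneralLinearGroup.mkOfDetNeZero _ hdet, ?_, ?_⟩
    · simp only [mobius, Matrix.GeneralLinearGroup.mkOfDetNeZero,
        Matrix.GeneralLinearGroup.mk', Matrix.unitOfDetInvertible]
      simp [hab, hcd, hl]
    · have hfin : algebraMap F E a * w + algebraMap F E b
          = w' * (algebraMap F E c * w + algebraMap F E d) := by
        apply mul_right_cancel₀ hzs
        linear_combination hlAB + (w - s z) * hab - (w - z) * hab'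
          - w' * (w - s z) * hcd + w' * (w - z) * hcd'
      have : (algebraMap F E a * w + algebraMap F E b)
          / (algebraMap F E c * w + algebraMap F E d) = w' := by
        rw [div_eq_iff hQ, hfin]
      simpa [mobius, Matrix.GeneralLinearGroup.mkOfDetNeZero,
        Matrix.GeneralLinearGroup.mk', Matrix.unitOfDetInvertible] using this

/-- **`D` classifies the `G`-orbits** in `H × H`: two pairs of points of the
finite upper half-plane `H = E ∖ F` lie in the same orbit of the homographic
action of `GL(2,F)` iff they have the same value of the invariant
`D(z,w) = N(z−w)/N(z−w̄)`, written in cross-multiplied form. -/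
theorem D_classifies_orbits
    (F E : Type) [Field F] [Fintype F] [Field E] [Fintype E] [Algebra F E]
    (hdim : Module.finrank F E = 2)
    (z w z' w' : E)
    (hz : z ∉ Set.range (algebraMap F E)) (hw : w ∉ Set.range (algebraMap F E))
    (hz' : z' ∉ Set.range (algebraMap F E))
    (hw' : w' ∉ Set.range (algebraMap F E)) :
    (∃ g : Matrix.GeneralLinearGroup (Fin 2) F,
        mobius F g z = z' ∧ mobius F g w = w')
      ↔ normE F (z - w) * normE F (z' - conjE F w')
          = normE F (z' - w') * normE F (z - conjE F w) := by
  have hs : ∀ x : E, FiniteField.frobeniusAlgHom F E (FiniteField.frobeniusAlgHom F E x) = x := by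
    intro x
    have hc := Module.card_eq_pow_finrank (K := F) (V := E)
    rw [hdim] at hc
    have := FiniteField.pow_card x
    rw [hc, pow_two, pow_mul] at this
    simpa [FiniteField.coe_frobeniusAlgHom] using this
  exact main_aux (FiniteField.frobeniusAlgHom F E) hs
    (fun x hx => fixed_mem F E x hx) z w z' w' hz hw hz'
end

section
/- The G-orbits in H × H under the homographic action are symmetric: for all z, w ∈ H there exists g ∈ GL(2,F) such that g·z = w and g·w = z. -/
/-- **Symmetry of the `G`-orbits in `H × H`** : for any two points `z, w` of
the finite upper half-plane `H = E ∖ F` there is a `g ∈ GL(2,F)` swapping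
them under the homographic action. -/
theorem orbits_symmetric
    (F E : Type) [Field F] [Fintype F] [Field E] [Fintype E] [Algebra F E]
    (hdim : Module.finrank F E = 2)
    (z w : E)
    (hz : z ∉ Set.range (algebraMap F E)) (hw : w ∉ Set.range (algebraMap F E)) :
    ∃ g : Matrix.GeneralLinearGroup (Fin 2) F,
      mobius F g z = w ∧ mobius F g w = z := by
  have hfin : FiniteDimensional F E := FiniteDimensional.of_finrank_pos (by omega)
  have hdep : ¬ LinearIndependent F ![z * w, z + w, (1 : E)] := by
    intro h
    have := h.fintype_card_le_finrank
    simp [hdim] at this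
  rw [Fintype.not_linearIndependent_iff] at hdep
  obtain ⟨k, hk, i, hi⟩ := hdep
  simp only [Fin.sum_univ_three, Algebra.smul_def] at hk
  simp at hk
  obtain ⟨c, hc⟩ : ∃ c, c = k 0 := ⟨_, rfl⟩
  obtain ⟨a, ha⟩ : ∃ a, a = - k 1 := ⟨_, rfl⟩
  obtain ⟨b, hb⟩ : ∃ b, b = - k 2 := ⟨_, rfl⟩
  have k0 : k 0 = c := hc.symm
  have k1 : k 1 = -a := by rw [ha, neg_neg]
  have k2 : k 2 = -b := by rw [hb, neg_neg]
  rw [k0, k1, k2] at hk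
  simp only [map_neg] at hk
  have hne : ¬ (c = 0 ∧ a = 0 ∧ b = 0) := by
    rintro ⟨h0, h1, h2⟩
    apply hi
    fin_cases i <;> simp [k0, k1, k2, h0, h1, h2]
  -- a linear form with coefficients in `F` vanishing at a point outside `F` is zero
  have key : ∀ x : E, x ∉ Set.range (algebraMap F E) →
      algebraMap F E c * x - algebraMap F E a = 0 → c = 0 ∧ a = 0 := by
    intro x hx h
    by_cases hc0 : c = 0
    · refine ⟨hc0, ?_⟩
      simpa [hc0] using h
    · exfalso
      apply hx
      refine ⟨a / c, ?_⟩
      have : algebraMap F E c ≠ 0 := by simpa using hc0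
      rw [map_div₀, div_eq_iff this]
      linear_combination -h
  have hca : ¬ (c = 0 ∧ a = 0) := by
    rintro ⟨h0, h1⟩
    refine hne ⟨h0, h1, ?_⟩
    simpa [h0, h1] using hk
  have hz' : algebraMap F E c * z - algebraMap F E a ≠ 0 := fun h => hca (key z hz h)
  have hw' : algebraMap F E c * w - algebraMap F E a ≠ 0 := fun h => hca (key w hw h)
  have hdet : (!![a, b; c, -a] : Matrix (Fin 2) (Fin 2) F).det ≠ 0 := by
    intro h
    rw [Matrix.det_fin_two_of] at h
    have h' := congrArg (algebraMap F E) h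
    simp only [map_sub, map_mul, map_neg, map_zero] at h'
    have : (algebraMap F E c * z - algebraMap F E a)
        * (algebraMap F E c * w - algebraMap F E a) = 0 := by
      linear_combination algebraMap F E c * hk - h'
    exact (mul_ne_zero hz' hw') this
  refine ⟨Matrix.GeneralLinearGroup.mkOfDetNeZero _ hdet, ?_, ?_⟩
  · simp only [mobius, Matrix.GeneralLinearGroup.mkOfDetNeZero]
    simp [Matrix.unitOfDetInvertible, Matrix.GeneralLinearGroup.mk']
    rw [← sub_eq_add_neg, div_eq_iff hz']
    linear_combination -hk
  · simp only [mobius, Matrix.GeneralLinearGroup.mkOfDetNeZero]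
    simp [Matrix.unitOfDetInvertible, Matrix.GeneralLinearGroup.mk']
    rw [← sub_eq_add_neg, div_eq_iff hw']
    linear_combination -hk
end

section
/- Let χ be the character of an irreducible complex representation of G. Then P_Φ χ is a nonzero function if and only if (P_Φ χ)(e) ≠ 0. -/
/-- A representation is irreducible: the space is nonzero and the only
invariant submodules are `⊥` and `⊤`. -/
def RepIsIrreducible {G V : Type} [Group G] [AddCommGroup V] [Module ℂ V]
    (π : Representation ℂ G V) : Prop :=
  (∃ v : V, v ≠ 0) ∧
    ∀ W : Submodule ℂ V, (∀ g : G, ∀ v ∈ W, π g v ∈ W) → W = ⊥ ∨ W = ⊤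

/-- The averaging operator `P_Φ` : `(P_Φ f)(g) = |K|⁻¹ Σ_{k ∈ K} Φ(k)⁻¹ f(k g)`. -/
noncomputable def Pavg {G : Type} [Group G] (K : Subgroup G) [Fintype K]
    (Φ : K →* ℂˣ) (f : G → ℂ) : G → ℂ :=
  fun g => (1 / (Fintype.card K) : ℂ) * ∑ k : K, (((Φ k)⁻¹ : ℂˣ) : ℂ) * f ((k : G) * g)

/-- For the character `χ` of an irreducible representation of a finite group
`G`, the averaged function `P_Φ χ` is nonzero iff it does not vanish at the
identity. -/
theorem Pavg_char_ne_zero_iff_at_one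
    (G : Type) [Group G] [Fintype G]
    (K : Subgroup G) [Fintype K] (Φ : K →* ℂˣ)
    (V : Type) [AddCommGroup V] [Module ℂ V] [FiniteDimensional ℂ V]
    (π : Representation ℂ G V) (hπ : RepIsIrreducible π) :
    Pavg K Φ (fun g => LinearMap.trace ℂ V (π g)) ≠ 0
      ↔ Pavg K Φ (fun g => LinearMap.trace ℂ V (π g)) 1 ≠ 0 := by
  classical
  have hc : (Fintype.card K : ℂ) ≠ 0 := by
    exact_mod_cast Fintype.card_ne_zero
  -- the unnormalised averaging operator on `V`
  let S : V →ₗ[ℂ] V := ∑ k : K, (((Φ k)⁻¹ : ℂˣ) : ℂ) • π (k : G)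
  let E : V →ₗ[ℂ] V := (1 / (Fintype.card K) : ℂ) • S
  have hP : ∀ g, Pavg K Φ (fun g => LinearMap.trace ℂ V (π g)) g
      = LinearMap.trace ℂ V (E * π g) := by
    intro g
    simp only [Pavg, E, S, smul_mul_assoc, Finset.sum_mul, map_smul, map_sum, smul_eq_mul, map_mul]
  have hk : ∀ k : K, ((((Φ k)⁻¹ : ℂˣ) : ℂ) • π (k : G)) * S = S := by
    intro k
    simp only [S, Finset.mul_sum]
    refine Fintype.sum_equiv (Equiv.mulLeft k) _ _ fun j => ?_
    rw [smul_mul_smul_comm]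
    simp only [Equiv.coe_mulLeft, map_mul, mul_inv, Units.val_mul, Subgroup.coe_mul]
  have hSS : S * S = (Fintype.card K : ℂ) • S := by
    conv_lhs => enter [1]; simp only [S]
    rw [Finset.sum_mul, Finset.sum_congr rfl fun k _ => hk k, Finset.sum_const,
      Finset.card_univ, Nat.cast_smul_eq_nsmul]
  have hE : IsIdempotentElem E := by
    unfold IsIdempotentElem
    simp only [E]
    rw [smul_mul_smul_comm, hSS, smul_smul]
    congr 1
    field_simp
  constructor
  · intro h h1
    apply h
    rw [hP, map_one, mul_one,
      (LinearMap.IsIdempotentElem.isProj_range E hE).trace] at h1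
    have h2 : Module.finrank ℂ (LinearMap.range E) = 0 := by exact_mod_cast h1
    have h3 : E = 0 := LinearMap.range_eq_bot.mp (Submodule.finrank_eq_zero.mp h2)
    funext g
    rw [hP, h3, zero_mul, map_zero, Pi.zero_apply]
  · intro h h0
    exact h (by rw [h0, Pi.zero_apply])
end

section
/- The map P_Φ is multiplicative on central functions: if f₁ : G → ℂ is a class function (constant on conjugacy classes) and f₂ : G → ℂ is any function, then P_Φ(f₁ * f₂) = (P_Φ f₁) * (P_Φ f₂), where (f * f')(g) = Σ_{h ∈ G} f(h) f'(h⁻¹ g). -/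
/-- Convolution of complex functions on a finite group. -/
noncomputable def conv {G : Type} [Group G] [Fintype G] (f f' : G → ℂ) : G → ℂ :=
  fun g => ∑ h : G, f h * f' (h⁻¹ * g)

/-- **`P_Φ` is multiplicative on central functions** : if `f₁` is a class
function on the finite group `G` and `f₂` is arbitrary, then
`P_Φ(f₁ * f₂) = (P_Φ f₁) * (P_Φ f₂)` (convolution products). -/
theorem Pavg_conv_class_function
    (G : Type) [Group G] [Fintype G]
    (K : Subgroup G) [Fintype K] (Φ : K →* ℂˣ)
    (f₁ f₂ : G → ℂ)
    (h₁ : ∀ g h : G, f₁ (h * g * h⁻¹) = f₁ g) :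
    Pavg K Φ (conv f₁ f₂) = conv (Pavg K Φ f₁) (Pavg K Φ f₂) := by
  have key : ∀ (g : G) (k l : K),
      ∑ h : G, ((((Φ k)⁻¹ : ℂˣ) : ℂ) * f₁ ((k : G) * h)) *
        ((((Φ l)⁻¹ : ℂˣ) : ℂ) * f₂ ((l : G) * (h⁻¹ * g))) =
      (((Φ (l * k))⁻¹ : ℂˣ) : ℂ) * conv f₁ f₂ (((l * k : K) : G) * g) := by
    intro g k l
    unfold conv
    rw [Finset.mul_sum]
    refine Fintype.sum_equiv
      ((Equiv.mulLeft ((l : G) * k)).trans (Equiv.mulRight (l : G)⁻¹)) _ _ ?_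
    intro h
    have e1 : f₁ ((l : G) * k * h * (l : G)⁻¹) = f₁ ((k : G) * h) := by
      rw [← h₁ ((k : G) * h) l, mul_assoc (l : G) k h]
    have e2 : ((l : G) * k * h * (l : G)⁻¹)⁻¹ * (((l * k : K) : G) * g)
        = (l : G) * (h⁻¹ * g) := by
      rw [Subgroup.coe_mul]; group
    simp only [Equiv.trans_apply, Equiv.coe_mulLeft, Equiv.coe_mulRight]
    rw [e1, e2, map_mul, mul_inv, Units.val_mul]
    ring
  have hc : (Fintype.card K : ℂ) ≠ 0 := Nat.cast_ne_zero.mpr Fintype.card_ne_zero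
  funext g
  have hR : conv (Pavg K Φ f₁) (Pavg K Φ f₂) g =
      (1 / (Fintype.card K) : ℂ) * (1 / (Fintype.card K) : ℂ) *
      ∑ l : K, ∑ k : K,
        (((Φ (l * k))⁻¹ : ℂˣ) : ℂ) * conv f₁ f₂ (((l * k : K) : G) * g) := by
    simp only [← key]
    simp only [Finset.sum_comm (s := (Finset.univ : Finset K)) (t := (Finset.univ : Finset G))]
    conv_lhs => unfold conv Pavg
    rw [Finset.mul_sum]
    refine Finset.sum_congr rfl fun h _ => ?_
    rw [mul_mul_mul_comm, Finset.sum_mul_sum, Finset.sum_comm]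
  have hl : ∀ l : K, ∑ k : K,
        (((Φ (l * k))⁻¹ : ℂˣ) : ℂ) * conv f₁ f₂ (((l * k : K) : G) * g) =
      ∑ m : K, (((Φ m)⁻¹ : ℂˣ) : ℂ) * conv f₁ f₂ ((m : G) * g) := fun l =>
    Fintype.sum_equiv (Equiv.mulLeft l) _ _ fun _ => rfl
  rw [hR, Finset.sum_congr rfl fun l _ => hl l, Finset.sum_const, Finset.card_univ,
    nsmul_eq_mul]
  unfold Pavg
  field_simp
end

section
/- P_Φ maps the center of the group algebra onto the center of the twisted Hecke algebra: (i) for every class function f : G → ℂ, the function P_Φ f lies in L¹_Φ(G,K) and commutes under convolution with every element of L¹_Φ(G,K); (ii) for every h ∈ L¹_Φ(G,K) that commutes under convolution with every element of L¹_Φ(G,K), there exists a class function f : G → ℂ with P_Φ f = h. -/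
/-- Membership in the twisted Hecke algebra `L¹_Φ(G,K)` :
`f(k g k') = Φ(k) f(g) Φ(k')` for all `g ∈ G`, `k, k' ∈ K`. -/
def InTwistedHecke {G : Type} [Group G] (K : Subgroup G) (Φ : K →* ℂˣ)
    (f : G → ℂ) : Prop :=
  ∀ (g : G) (k k' : K), f ((k : G) * g * (k' : G)) = (Φ k : ℂ) * f g * (Φ k' : ℂ)


namespace HeckeAux
open MonoidAlgebra

theorem ring_part {A : Type*} [Ring A] [IsSemisimpleRing A] (e z : A) (he : e * e = e)
    (hez : e * z = z) (hze : z * e = z)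
    (hz : ∀ a : A, z * (e * a * e) = (e * a * e) * z) :
    ∃ c : A, ∀ a : A, e * a * c = z * a := by
  obtain ⟨f, hf, hI⟩ := IsSemisimpleRing.ideal_eq_span_idempotent
    (Ideal.span (Set.range fun b : A => e * b))
  have key : ∀ x ∈ Ideal.span (Set.range fun b : A => e * b),
      ∃ c : A, ∀ a : A, e * a * c = z * a * x := by
    intro x hx
    induction hx using Submodule.span_induction with
    | mem x h =>
      obtain ⟨b, rfl⟩ := h
      refine ⟨z * b, fun a => ?_⟩
      calc e * a * (z * b) = e * a * ((e * z) * b) := by rw [hez]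
        _ = (e * a * e) * z * b := by noncomm_ring
        _ = z * (e * a * e) * b := by rw [hz]
        _ = (z * e) * a * (e * b) := by noncomm_ring
        _ = _ := by rw [hze]
    | zero => exact ⟨0, by simp⟩
    | add x y _ _ hx hy =>
      obtain ⟨c, hc⟩ := hx
      obtain ⟨d, hd⟩ := hy
      exact ⟨c + d, fun a => by rw [mul_add, mul_add, hc, hd]⟩
    | smul r x _ hx =>
      obtain ⟨c, hc⟩ := hx
      refine ⟨r * c, fun a => ?_⟩
      have := hc (a * r)
      simpa [mul_assoc] using this
  obtain ⟨c, hc⟩ := key f (by rw [hI]; exact Ideal.subset_span rfl)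
  refine ⟨c, fun a => ?_⟩
  have h1 : e * a ∈ Ideal.span {f} := by
    rw [← hI]; exact Ideal.subset_span ⟨a, rfl⟩
  obtain ⟨y, hy⟩ := Ideal.mem_span_singleton'.1 h1
  have h2 : e * a * f = e * a := by rw [← hy, mul_assoc, hf.eq]
  calc e * a * c = z * a * f := hc a
    _ = z * (e * a * f) := by rw [← hze]; simp only [mul_assoc]; rw [← mul_assoc e e, he]
    _ = z * e * a := by rw [h2, mul_assoc]
    _ = z * a := by rw [hze]

variable {G : Type} [Group G] [Fintype G]

noncomputable def toA (f : G → ℂ) : MonoidAlgebra ℂ G :=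
  .ofCoeff (Finsupp.equivFunOnFinite.symm f)

theorem toA_coeff (f : G → ℂ) (g : G) : (toA f).coeff g = f g := rfl

theorem coeff_mul' (x y : MonoidAlgebra ℂ G) (g : G) :
    (x * y).coeff g = ∑ h, x.coeff h * y.coeff (h⁻¹ * g) := by
  classical
  rw [MonoidAlgebra.coeff_mul, Finsupp.sum_fintype _ _ (by simp)]
  refine Finset.sum_congr rfl fun h _ => ?_
  rw [Finsupp.sum_fintype _ _ (by simp)]
  rw [Finset.sum_eq_single (h⁻¹ * g)]
  · simp
  · intro b _ hb
    rw [if_neg]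
    rintro rfl
    simp at hb
  · simp

theorem coeff_s_mul (x : MonoidAlgebra ℂ G) (r : ℂ) (k g : G) :
    (single k r * x).coeff g = r * x.coeff (k⁻¹ * g) := by
  classical
  rw [coeff_mul']
  simp [Finsupp.single_apply]

theorem coeff_mul_s (x : MonoidAlgebra ℂ G) (r : ℂ) (k g : G) :
    (x * single k r).coeff g = x.coeff (g * k⁻¹) * r := by
  classical
  rw [coeff_mul', Finset.sum_eq_single (g * k⁻¹)]
  · simp
  · intro b _ hb
    rw [coeff_single, Finsupp.single_apply, if_neg, mul_zero]
    rintro rfl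
    simp at hb
  · simp

theorem toA_conv (f f' : G → ℂ) : toA (conv f f') = toA f * toA f' := by
  ext g
  rw [coeff_mul']
  rfl

theorem toA_inj {f f' : G → ℂ} (h : toA f = toA f') : f = f' := by
  funext g
  rw [← toA_coeff f, h, toA_coeff]

theorem toA_surj (x : MonoidAlgebra ℂ G) : ∃ f, toA f = x := ⟨fun g => x.coeff g, by ext; rfl⟩

theorem toA_comm (f : G → ℂ) (hf : ∀ g h : G, f (h * g * h⁻¹) = f g) (x : MonoidAlgebra ℂ G) :
    toA f * x = x * toA f := by
  induction x using MonoidAlgebra.induction_linear with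
  | zero => simp
  | add a b ha hb => rw [mul_add, add_mul, ha, hb]
  | single g r =>
    ext t
    simp only [coeff_mul_s, coeff_s_mul, toA_coeff]
    rw [mul_comm, ← hf (t * g⁻¹) g⁻¹]
    simp [mul_assoc]

variable (K : Subgroup G) [Fintype K] (Φ : K →* ℂˣ)

noncomputable def e : MonoidAlgebra ℂ G :=
  (1 / (Fintype.card K) : ℂ) • ∑ k : K, single (k : G) (Φ k : ℂ)

theorem e_mul (f : G → ℂ) : e K Φ * toA f = toA (Pavg K Φ f) := by
  ext g
  simp only [e, smul_mul_assoc, Finset.sum_mul, coeff_smul_apply, coeff_sum, Finsupp.finsetSum_apply,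
    coeff_s_mul, toA_coeff, Pavg, smul_eq_mul]
  congr 1
  rw [← Equiv.sum_comp (Equiv.inv K)]
  simp

theorem mul_e (f : G → ℂ) (g : G) : (toA f * e K Φ).coeff g =
    (1 / (Fintype.card K) : ℂ) * ∑ k : K, f (g * (k : G)⁻¹) * (Φ k : ℂ) := by
  simp only [e, mul_smul_comm, Finset.mul_sum, coeff_smul_apply, coeff_sum, Finsupp.finsetSum_apply,
    coeff_mul_s, toA_coeff, smul_eq_mul]

theorem hecke_iff (f : G → ℂ) :
    InTwistedHecke K Φ f ↔ e K Φ * toA f = toA f ∧ toA f * e K Φ = toA f := by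
  have hK : (Fintype.card K : ℂ) ≠ 0 := by simp
  constructor
  · intro h
    constructor
    · rw [e_mul]
      congr 1
      funext g
      have h' : ∀ k : K, f (k * g) = (Φ k : ℂ) * f g := fun k => by simpa using h g k 1
      simp [Pavg, h']
    · ext g
      rw [mul_e]
      have h' : ∀ k : K, f (g * (k : G)⁻¹) = f g * (Φ k : ℂ)⁻¹ := fun k => by
        simpa using h g 1 k⁻¹
      simp [h', toA_coeff]
  · rintro ⟨h1, h2⟩ g k k'
    rw [e_mul] at h1
    have h1 := toA_inj h1
    have hl : ∀ (k : K) g, f (k * g) = (Φ k : ℂ) * f g := by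
      intro k g
      rw [← h1]
      simp only [Pavg]
      rw [← Equiv.sum_comp (Equiv.mulRight k)
        (fun j : K => (((Φ j)⁻¹ : ℂˣ) : ℂ) * f ((j : G) * g)), mul_left_comm,
        Finset.mul_sum _ _ (Φ k : ℂ)]
      refine congrArg _ (Finset.sum_congr rfl fun j _ => ?_)
      simp [mul_assoc]
    have hr : ∀ (k : K) g, f (g * k) = f g * (Φ k : ℂ) := by
      intro k g
      have h3 : ∀ g, f g = (1 / (Fintype.card K) : ℂ) * ∑ k : K, f (g * (k : G)⁻¹) * (Φ k : ℂ) := by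
        intro g
        rw [← mul_e, h2, toA_coeff]
      rw [h3 (g * k), h3 g]
      rw [← Equiv.sum_comp (Equiv.mulRight k), mul_assoc, Finset.sum_mul]
      refine congrArg _ (Finset.sum_congr rfl fun j _ => ?_)
      simp [mul_assoc]
    rw [hr, hl]

theorem e_idem : e K Φ * e K Φ = e K Φ := by
  have hK : (Fintype.card K : ℂ) ≠ 0 := by simp
  have h : ∀ k : K, single (k : G) (Φ k : ℂ) * ∑ j : K, single (j : G) (Φ j : ℂ) =
      ∑ j : K, single (j : G) (Φ j : ℂ) := by
    intro k
    rw [Finset.mul_sum, ← Equiv.sum_comp (Equiv.mulLeft k) (fun j : K => single (j : G) (Φ j : ℂ))]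
    simp [single_mul_single]
  simp only [e, smul_mul_assoc, mul_smul_comm, Finset.sum_mul, h]
  rw [Finset.sum_const, Finset.card_univ, ← Nat.cast_smul_eq_nsmul ℂ, smul_smul, smul_smul]
  congr 1
  field_simp

end HeckeAux

open HeckeAux in
/-- **`P_Φ` maps the center of `L¹(G)` onto the center of `L¹_Φ(G,K)`** :
(i) for every class function `f`, `P_Φ f` lies in `L¹_Φ(G,K)` and commutes
with every element of `L¹_Φ(G,K)` under convolution; (ii) every element of
the center of `L¹_Φ(G,K)` is of the form `P_Φ f` for a class function `f`. -/
theorem Pavg_center_onto_center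
    (G : Type) [Group G] [Fintype G]
    (K : Subgroup G) [Fintype K] (Φ : K →* ℂˣ) :
    (∀ f : G → ℂ, (∀ g h : G, f (h * g * h⁻¹) = f g) →
      InTwistedHecke K Φ (Pavg K Φ f) ∧
        ∀ f' : G → ℂ, InTwistedHecke K Φ f' →
          conv (Pavg K Φ f) f' = conv f' (Pavg K Φ f)) ∧
    (∀ h : G → ℂ, InTwistedHecke K Φ h →
      (∀ f' : G → ℂ, InTwistedHecke K Φ f' → conv h f' = conv f' h) →
      ∃ f : G → ℂ, (∀ g h' : G, f (h' * g * h'⁻¹) = f g) ∧ Pavg K Φ f = h) := by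
  constructor
  · intro f hf
    have hc := toA_comm f hf
    have hee := e_idem K Φ
    constructor
    · rw [hecke_iff, ← e_mul]
      constructor
      · rw [← mul_assoc, hee]
      · rw [mul_assoc, hc, ← mul_assoc, hee]
    · intro f' hf'
      obtain ⟨h1, h2⟩ := (hecke_iff K Φ f').1 hf'
      apply toA_inj
      rw [toA_conv, toA_conv, ← e_mul, ← mul_assoc, h2, ← hc, mul_assoc, hc, h1]
  · intro h hh hcomm
    obtain ⟨h1, h2⟩ := (hecke_iff K Φ h).1 hh
    have hee := e_idem K Φ
    obtain ⟨c, hc⟩ := ring_part (e K Φ) (toA h) hee h1 h2 (by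
      intro a
      obtain ⟨f', hf'⟩ := toA_surj (e K Φ * a * e K Φ)
      rw [← hf', ← toA_conv, ← toA_conv, hcomm]
      rw [hecke_iff, hf']
      constructor
      · simp only [← mul_assoc, hee]
      · simp only [mul_assoc, hee])
    have hG : (Fintype.card G : ℂ) ≠ 0 := by simp
    obtain ⟨f, hf⟩ := toA_surj ((1 / (Fintype.card G) : ℂ) •
      ∑ g : G, MonoidAlgebra.single g (1 : ℂ) * c * MonoidAlgebra.single g⁻¹ (1 : ℂ))
    refine ⟨f, ?_, ?_⟩
    · intro g k
      rw [← toA_coeff f, ← toA_coeff f, hf]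
      simp only [MonoidAlgebra.coeff_smul_apply, MonoidAlgebra.coeff_sum,
        Finsupp.finsetSum_apply, coeff_mul_s, coeff_s_mul]
      congr 1
      rw [← Equiv.sum_comp (Equiv.mulLeft k)]
      simp [mul_assoc]
    · apply toA_inj
      rw [← e_mul, hf, mul_smul_comm, Finset.mul_sum]
      simp only [← mul_assoc, hc]
      simp only [mul_assoc, MonoidAlgebra.single_mul_single]
      simp [← MonoidAlgebra.one_def, ← Nat.cast_smul_eq_nsmul ℂ, smul_smul]
end

section
/- The dimension of the center of the twisted Hecke algebra equals the number of irreducible representations appearing in Ind_K^G Φ: the dimension of the ℂ-vector space of functions h ∈ L¹_Φ(G,K) that commute under convolution with every element of L¹_Φ(G,K) equals the number of isomorphism classes of irreducible complex representations (π, V) of G such that there exists a nonzero v ∈ V with π(k) v = Φ(k) v for all k ∈ K. -/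
/-- The center of the twisted Hecke algebra `L¹_Φ(G,K)`, as a `ℂ`-subspace of
the space of all complex functions on `G`. -/
noncomputable def twistedHeckeCenter (G : Type) [Group G] [Fintype G]
    (K : Subgroup G) (Φ : K →* ℂˣ) : Submodule ℂ (G → ℂ) where
  carrier := {h | InTwistedHecke K Φ h ∧
    ∀ f : G → ℂ, InTwistedHecke K Φ f → conv h f = conv f h}
  add_mem' := by
    rintro h₁ h₂ ⟨m₁, c₁⟩ ⟨m₂, c₂⟩
    constructor
    · intro g k k'
      simp only [Pi.add_apply, m₁ g k k', m₂ g k k']; ring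
    · intro f hf
      funext g
      have e₁ := congrFun (c₁ f hf) g
      have e₂ := congrFun (c₂ f hf) g
      simp only [conv] at e₁ e₂
      simp only [conv, Pi.add_apply, add_mul, mul_add, Finset.sum_add_distrib,
        e₁, e₂]
  zero_mem' := by
    constructor
    · intro g k k'; simp
    · intro f hf; funext g; simp [conv]
  smul_mem' := by
    rintro c h ⟨mh, ch⟩
    constructor
    · intro g k k'
      simp only [Pi.smul_apply, smul_eq_mul, mh g k k']; ring
    · intro f hf
      funext g
      have e := congrFun (ch f hf) g
      simp only [conv] at e
      calc ∑ x : G, (c • h) x * f (x⁻¹ * g)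
          = c * ∑ x : G, h x * f (x⁻¹ * g) := by
            rw [Finset.mul_sum]
            exact Finset.sum_congr rfl fun x _ => by
              simp only [Pi.smul_apply, smul_eq_mul, mul_assoc]
        _ = c * ∑ x : G, f x * h (x⁻¹ * g) := by rw [e]
        _ = ∑ x : G, f x * (c • h) (x⁻¹ * g) := by
            rw [Finset.mul_sum]
            exact Finset.sum_congr rfl fun x _ => by
              simp only [Pi.smul_apply, smul_eq_mul]; ring

/-- Density for a finite family of pairwise non-isomorphic simple modules. -/
lemma density_family {A : Type} [Ring A] [Algebra ℂ A] [IsSemisimpleRing A]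
    {I : Type} [Fintype I] (M : I → Type)
    [∀ i, AddCommGroup (M i)] [∀ i, Module ℂ (M i)] [∀ i, Module A (M i)]
    [∀ i, IsScalarTower ℂ A (M i)] [∀ i, FiniteDimensional ℂ (M i)]
    [∀ i, IsSimpleModule A (M i)]
    (hd : ∀ i j, i ≠ j → IsEmpty (M i ≃ₗ[A] M j))
    (T : ∀ i, M i →ₗ[ℂ] M i) : ∃ a : A, ∀ i (m : M i), T i m = a • m := by
  classical
  have key : ∀ φ : Module.End A (∀ i, M i), ∀ i, ∃ c : ℂ, ∀ m, φ m i = c • m i := by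
    intro φ i
    let ψ : ∀ j, M j →ₗ[A] M i := fun j =>
      (LinearMap.proj i).comp (φ.comp (LinearMap.single A M j))
    have h0 : ∀ j, j ≠ i → ψ j = 0 := by
      intro j hj
      rcases LinearMap.bijective_or_eq_zero (ψ j) with h | h
      · exact ((hd j i hj).false (LinearEquiv.ofBijective _ h)).elim
      · exact h
    obtain ⟨c, hc⟩ :=
      (IsSimpleModule.algebraMap_end_bijective_of_isAlgClosed (A := A) (V := M i) ℂ).2 (ψ i)
    refine ⟨c, fun m => ?_⟩
    have e : φ m i = ∑ j, ψ j (m j) := by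
      conv_lhs => rw [← Finset.univ_sum_single m]
      simp [ψ, map_sum, Finset.sum_apply]
    rw [e, Finset.sum_eq_single i]
    · rw [← hc]; rfl
    · intro j _ hj; rw [h0 j hj]; rfl
    · simp
  let f : Module.End (Module.End A (∀ i, M i)) (∀ i, M i) :=
    { toFun := fun m i => T i (m i)
      map_add' := by intro x y; ext i; simp
      map_smul' := by
        intro φ m
        ext i
        obtain ⟨c, hc⟩ := key φ i
        simp only [Module.End.smul_def, RingHom.id_apply]
        rw [hc, hc, map_smul] }
  obtain ⟨s, hs⟩ := (Module.Finite.fg_top : (⊤ : Submodule ℂ (∀ i, M i)).FG)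
  obtain ⟨a, ha⟩ := jacobson_density f s
  have hall : ∀ m : (∀ i, M i), f m = a • m := by
    intro m
    have hm : m ∈ Submodule.span ℂ (s : Set (∀ i, M i)) := by rw [hs]; trivial
    induction hm using Submodule.span_induction with
    | mem m hm => exact ha m hm
    | zero => simp
    | add x y _ _ hx hy => rw [map_add, hx, hy, smul_add]
    | smul c x _ hx =>
      ext i
      have := congrFun hx i
      simp only [f, LinearMap.coe_mk, AddHom.coe_mk, Pi.smul_apply, map_smul] at this ⊢
      rw [this, ← algebraMap_smul A c (a • x i), ← algebraMap_smul A c (x i), smul_smul, smul_smul,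
        Algebra.commutes]
  refine ⟨a, fun i m => ?_⟩
  have := congrFun (hall (Pi.single i m)) i
  simpa [f] using this

/-- In a corner of an endomorphism algebra the center consists of scalars. -/
lemma corner_center {V : Type} [AddCommGroup V] [Module ℂ V]
    (p T : Module.End ℂ V) (hp : p * p = p) (hT1 : p * T = T) (hT2 : T * p = T)
    (hc : ∀ S : Module.End ℂ V, p * S = S → S * p = S → T * S = S * T) :
    ∃ c : ℂ, T = c • p := by
  by_cases h0 : p = 0
  · refine ⟨0, ?_⟩
    rw [← hT1, h0]; simp
  · obtain ⟨u, hu⟩ : ∃ u, p u ≠ 0 := by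
      by_contra! h
      exact h0 (LinearMap.ext h)
    obtain ⟨φ, hφ⟩ := Module.Projective.exists_dual_eq_one ℂ hu
    have hpp : ∀ w, p (p w) = p w := fun w => LinearMap.congr_fun hp w
    refine ⟨φ (T u), LinearMap.ext fun w => ?_⟩
    let S : Module.End ℂ V := p * (φ.smulRight w) * p
    have hS := hc S (by simp only [S, ← mul_assoc, hp]) (by simp only [S, mul_assoc, hp])
    have e := LinearMap.congr_fun hS u
    have e1 : ∀ w, T (p w) = T w := fun w => LinearMap.congr_fun hT2 w
    have e2 : ∀ w, p (T w) = T w := fun w => LinearMap.congr_fun hT1 w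
    simpa [S, hφ, e1, e2] using e

/-- An element of the group algebra killing all irreducibles is zero. -/
lemma groupAlg_eq_zero {G : Type} [Group G] [Fintype G] (a : MonoidAlgebra ℂ G)
    (h : ∀ (W : Type) [AddCommGroup W] [Module ℂ W] [FiniteDimensional ℂ W]
      (ρ : Representation ℂ G W), RepIsIrreducible ρ → ρ.asAlgebraHom a = 0) : a = 0 := by
  let A := MonoidAlgebra ℂ G
  have : FiniteDimensional ℂ A := inferInstance
  have hS : ∀ S : Submodule A A, IsSimpleModule A S → ∀ x ∈ S, a * x = 0 := by
    intro S hS x hx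
    let α : A →ₐ[ℂ] Module.End ℂ S := Algebra.lsmul ℂ ℂ S
    let ρ : Representation ℂ G S := (α : A →* Module.End ℂ S).comp (MonoidAlgebra.of ℂ G)
    have hα : ρ.asAlgebraHom = α := by
      have : ρ = (α : A →* Module.End ℂ S).comp (MonoidAlgebra.of ℂ G) := rfl
      rw [Representation.asAlgebraHom_def, this]
      exact (MonoidAlgebra.lift ℂ _ G).apply_symm_apply α
    have : FiniteDimensional ℂ S := FiniteDimensional.of_injective (S.subtype.restrictScalars ℂ) S.subtype_injective
    have hirr : RepIsIrreducible ρ := by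
      constructor
      · have := IsSimpleModule.nontrivial A S
        exact exists_ne 0
      · intro W hW
        have hW' : ∀ (b : A) (w : S), w ∈ W → b • w ∈ W := by
          intro b w hw
          induction b using MonoidAlgebra.induction_on with
          | of g => exact hW g w hw
          | add f g hf hg => rw [add_smul]; exact W.add_mem hf hg
          | smul r f hf => rw [smul_assoc]; exact W.smul_mem r hf
        let W' : Submodule A S := { W with smul_mem' := fun b w hw => hW' b w hw }
        rcases eq_bot_or_eq_top W' with h | h
        · left; ext w
          have : w ∈ W' ↔ w ∈ (⊥ : Submodule A S) := by rw [h]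
          exact this
        · right; ext w
          have : w ∈ W' ↔ w ∈ (⊤ : Submodule A S) := by rw [h]
          exact this
    have := h S ρ hirr
    rw [hα] at this
    have := congrArg Subtype.val (LinearMap.congr_fun this ⟨x, hx⟩)
    simpa [α] using this
  have htop := IsSemisimpleModule.sSup_simples_eq_top A A
  have h1 : (1 : A) ∈ sSup {m : Submodule A A | IsSimpleModule A m} := by rw [htop]; trivial
  rw [sSup_eq_iSup'] at h1
  have key : ∀ x ∈ ⨆ S : {m : Submodule A A | IsSimpleModule A m}, (S : Submodule A A),
      a * x = 0 := by
    intro x hx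
    induction hx using Submodule.iSup_induction' with
    | mem S x hx => exact hS S.1 S.2 x hx
    | zero => simp
    | add x y _ _ hx hy => rw [mul_add, hx, hy, add_zero]
  simpa using key 1 h1

/-- The averaging projector onto the `Φ`-isotypic vectors. -/
noncomputable def phiProj {G : Type} [Group G] (K : Subgroup G) [Fintype K]
    (Φ : K →* ℂˣ) {V : Type} [AddCommGroup V] [Module ℂ V] (π : Representation ℂ G V) :
    Module.End ℂ V :=
  (Fintype.card K : ℂ)⁻¹ • ∑ k : K, (Φ k : ℂ) • π ((k : G)⁻¹)

section proj
variable {G : Type} [Group G] (K : Subgroup G) [Fintype K]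
    (Φ : K →* ℂˣ) {V : Type} [AddCommGroup V] [Module ℂ V] (π : Representation ℂ G V)

lemma phi_mul_inv (k : K) : (Φ k : ℂ) * (Φ k⁻¹ : ℂ) = 1 := by
  rw [← Units.val_mul, ← map_mul]; simp

lemma rho_inv_apply (v : V) (h : ∀ k : K, π (k : G) v = (Φ k : ℂ) • v) :
    phiProj K Φ π v = v := by
  have : ∀ k : K, (Φ k : ℂ) • π ((k : G)⁻¹) v = v := by
    intro k
    have := h k⁻¹
    rw [Subgroup.coe_inv] at this
    rw [this, smul_smul, phi_mul_inv, one_smul]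
  simp only [phiProj, LinearMap.smul_apply, LinearMap.sum_apply, this, Finset.sum_const,
    Finset.card_univ]
  rw [← Nat.cast_smul_eq_nsmul ℂ, smul_smul, inv_mul_cancel₀, one_smul]
  exact_mod_cast Fintype.card_ne_zero

lemma rho_mul_phiProj (k : K) : π (k : G) * phiProj K Φ π = (Φ k : ℂ) • phiProj K Φ π := by
  rw [phiProj, mul_smul_comm, smul_comm]
  congr 1
  rw [Finset.mul_sum, Finset.smul_sum]
  refine Fintype.sum_equiv (Equiv.mulRight k⁻¹) _ _ fun j => ?_
  rw [mul_smul_comm, ← map_mul, smul_smul]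
  simp only [Equiv.coe_mulRight, map_mul, Subgroup.coe_mul, Subgroup.coe_inv, mul_inv_rev, inv_inv,
    Units.val_mul]
  congr 1
  have := phi_mul_inv K Φ k
  linear_combination (-(Φ j : ℂ)) * this

lemma phiProj_mul_rho (k : K) : phiProj K Φ π * π (k : G) = (Φ k : ℂ) • phiProj K Φ π := by
  rw [phiProj, smul_mul_assoc, smul_comm]
  congr 1
  rw [Finset.sum_mul, Finset.smul_sum]
  refine Fintype.sum_equiv (Equiv.mulLeft k⁻¹) _ _ fun j => ?_
  rw [smul_mul_assoc, ← map_mul, smul_smul]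
  simp only [Equiv.coe_mulLeft, map_mul, Subgroup.coe_mul, Subgroup.coe_inv, mul_inv_rev, inv_inv,
    Units.val_mul]
  congr 1
  have := phi_mul_inv K Φ k
  linear_combination (-(Φ j : ℂ)) * this

lemma phiProj_left_iff (T : Module.End ℂ V) :
    (∀ k : K, π (k : G) * T = (Φ k : ℂ) • T) ↔ phiProj K Φ π * T = T := by
  constructor
  · intro h
    ext v
    exact rho_inv_apply K Φ π (T v) fun k => LinearMap.congr_fun (h k) v
  · intro h k
    rw [← h, ← mul_assoc, rho_mul_phiProj, smul_mul_assoc]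

lemma phiProj_right_iff (T : Module.End ℂ V) :
    (∀ k : K, T * π (k : G) = (Φ k : ℂ) • T) ↔ T * phiProj K Φ π = T := by
  constructor
  · intro h
    have : ∀ k : K, (Φ k : ℂ) • (T * π ((k : G)⁻¹)) = T := by
      intro k
      have := h k⁻¹
      rw [Subgroup.coe_inv] at this
      rw [this, smul_smul, phi_mul_inv, one_smul]
    simp only [phiProj, mul_smul_comm, Finset.mul_sum, this, Finset.sum_const,
      Finset.card_univ]
    rw [← Nat.cast_smul_eq_nsmul ℂ, smul_smul, inv_mul_cancel₀, one_smul]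
    exact_mod_cast Fintype.card_ne_zero
  · intro h k
    rw [← h, mul_assoc, phiProj_mul_rho, mul_smul_comm]

lemma phiProj_idem : phiProj K Φ π * phiProj K Φ π = phiProj K Φ π :=
  (phiProj_left_iff K Φ π _).1 (rho_mul_phiProj K Φ π)

lemma phiProj_ne_zero_iff : phiProj K Φ π ≠ 0 ↔
    ∃ v : V, v ≠ 0 ∧ ∀ k : K, π (k : G) v = (Φ k : ℂ) • v := by
  constructor
  · intro h
    obtain ⟨u, hu⟩ : ∃ u, phiProj K Φ π u ≠ 0 := by
      by_contra! h'
      exact h (LinearMap.ext h')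
    exact ⟨_, hu, fun k => LinearMap.congr_fun (rho_mul_phiProj K Φ π k) u⟩
  · rintro ⟨v, hv, h⟩ h0
    have := rho_inv_apply K Φ π v h
    rw [h0] at this
    exact hv this.symm

end proj

/-- The (anti-multiplicative) Fourier transform. -/
noncomputable def grpTransform {G : Type} [Group G] [Fintype G] {V : Type} [AddCommGroup V]
    [Module ℂ V] (π : Representation ℂ G V) : (G → ℂ) →ₗ[ℂ] Module.End ℂ V where
  toFun f := ∑ g, f g • π g⁻¹
  map_add' f f' := by simp [add_smul, Finset.sum_add_distrib]
  map_smul' c f := by simp [Finset.smul_sum, smul_smul]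

section transf
variable {G : Type} [Group G] [Fintype G] {V : Type} [AddCommGroup V]
    [Module ℂ V] (π : Representation ℂ G V)

lemma grpTransform_apply (f : G → ℂ) : grpTransform π f = ∑ g, f g • π g⁻¹ := rfl

lemma grpTransform_conv (f f' : G → ℂ) : grpTransform π (conv f f') = grpTransform π f' * grpTransform π f := by
  simp only [grpTransform_apply, conv, Finset.sum_smul]
  rw [Finset.sum_comm, Finset.mul_sum]
  refine Finset.sum_congr rfl fun h _ => ?_
  rw [Finset.sum_mul]
  refine Fintype.sum_equiv (Equiv.mulLeft h⁻¹) _ _ fun g => ?_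
  simp only [Equiv.coe_mulLeft, smul_mul_smul_comm, ← map_mul, mul_inv_rev, inv_inv]
  rw [mul_assoc, mul_inv_cancel, mul_one, mul_comm]

lemma grpTransform_left (f : G → ℂ) (k : G) :
    grpTransform π (fun g => f (k * g)) = grpTransform π f * π k := by
  simp only [grpTransform_apply, Finset.sum_mul]
  refine Fintype.sum_equiv (Equiv.mulLeft k) _ _ fun g => ?_
  simp [smul_mul_assoc, ← map_mul]

lemma grpTransform_right (f : G → ℂ) (k : G) :
    grpTransform π (fun g => f (g * k)) = π k * grpTransform π f := by
  simp only [grpTransform_apply, Finset.mul_sum]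
  refine Fintype.sum_equiv (Equiv.mulRight k) _ _ fun g => ?_
  simp [mul_smul_comm, ← map_mul]

lemma grpTransform_eq_alg (f : G → ℂ) :
    grpTransform π f = π.asAlgebraHom (∑ g, MonoidAlgebra.single g⁻¹ (f g)) := by
  simp [grpTransform_apply, map_sum]

lemma alg_eq_grpTransform (a : MonoidAlgebra ℂ G) :
    π.asAlgebraHom a = grpTransform π (fun g => a.coeff g⁻¹) := by
  rw [grpTransform_apply, Representation.asAlgebraHom_def, MonoidAlgebra.lift_apply,
    Finsupp.sum_fintype _ _ (by simp)]
  exact Fintype.sum_equiv (Equiv.inv G) _ _ fun g => by simp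

end transf

lemma inTwisted_iff {G : Type} [Group G] (K : Subgroup G) (Φ : K →* ℂˣ) (f : G → ℂ) :
    InTwistedHecke K Φ f ↔
      (∀ k : K, (fun g => f ((k : G) * g)) = (Φ k : ℂ) • f) ∧
      (∀ k : K, (fun g => f (g * (k : G))) = (Φ k : ℂ) • f) := by
  constructor
  · intro h
    refine ⟨fun k => funext fun g => ?_, fun k => funext fun g => ?_⟩
    · simpa using h g k 1
    · simpa [mul_comm] using h g 1 k
  · rintro ⟨h1, h2⟩ g k k'
    have a := congrFun (h2 k') ((k : G) * g)
    have b := congrFun (h1 k) g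
    simp only [Pi.smul_apply, smul_eq_mul] at a b
    rw [a, b]; ring

lemma isSimple_of_irr {G V : Type} [Group G] [AddCommGroup V] [Module ℂ V]
    (π : Representation ℂ G V) (h : RepIsIrreducible π) :
    IsSimpleModule (MonoidAlgebra ℂ G) π.asModule := by
  rw [← Representation.irreducible_iff_isSimpleModule_asModule]
  obtain ⟨⟨v, hv⟩, h2⟩ := h
  refine { exists_pair_ne := ⟨⊥, ⊤, fun e => hv ?_⟩, eq_bot_or_eq_top := fun W => ?_ }
  · have : v ∈ (⊤ : Subrepresentation π).toSubmodule := by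
      change v ∈ (⊤ : Submodule ℂ V); trivial
    rw [← e] at this
    exact this
  · rcases h2 W.toSubmodule (fun g v hv => W.apply_mem_toSubmodule g hv) with h | h
    · left; exact Subrepresentation.toSubmodule_injective h
    · right; exact Subrepresentation.toSubmodule_injective h

/-- **The dimension of the center of `L¹_Φ(G,K)` equals the number of
irreducible representations of `G` occurring in `Ind_K^G Φ`** : given a
complete family of pairwise non-isomorphic irreducible representations of the
finite group `G`, the dimension of the center of the twisted Hecke algebra
equals the number of members of the family containing the character `Φ` of
`K`. -/
theorem twistedHeckeCenter_finrank
    (G : Type) [Group G] [Fintype G]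
    (K : Subgroup G) [Fintype K] (Φ : K →* ℂˣ)
    (I : Type) [Fintype I] (V : I → Type)
    [∀ i, AddCommGroup (V i)] [∀ i, Module ℂ (V i)]
    [∀ i, FiniteDimensional ℂ (V i)]
    (π : ∀ i, Representation ℂ G (V i))
    (hirr : ∀ i, RepIsIrreducible (π i))
    (hdisj : ∀ i j, i ≠ j →
      ¬∃ e : V i ≃ₗ[ℂ] V j, ∀ (g : G) (v : V i), e (π i g v) = π j g (e v))
    (hcomplete : ∀ (W : Type) [AddCommGroup W] [Module ℂ W]
      [FiniteDimensional ℂ W] (ρ : Representation ℂ G W), RepIsIrreducible ρ →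
      ∃ i, ∃ e : W ≃ₗ[ℂ] V i, ∀ (g : G) (v : W), e (ρ g v) = π i g (e v)) :
    Module.finrank ℂ ↥(twistedHeckeCenter G K Φ)
      = Nat.card {i : I // ∃ v : V i, v ≠ 0 ∧
          ∀ k : K, π i (k : G) v = (Φ k : ℂ) • v} := by

  classical
  let F : (G → ℂ) →ₗ[ℂ] (∀ i, Module.End ℂ (V i)) := LinearMap.pi fun i => grpTransform (π i)
  have hFi : ∀ f i, F f i = grpTransform (π i) f := fun f i => rfl
  have hinj : Function.Injective F := by
    rw [injective_iff_map_eq_zero]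
    intro f hf
    have ha : (∑ g, MonoidAlgebra.single g⁻¹ (f g) : MonoidAlgebra ℂ G) = 0 := by
      apply groupAlg_eq_zero
      intro W _ _ _ ρ hρ
      obtain ⟨i, e, he⟩ := hcomplete W ρ hρ
      rw [← grpTransform_eq_alg]
      ext w
      apply e.injective
      have h0 : grpTransform (π i) f (e w) = 0 := by rw [← hFi, hf]; rfl
      rw [grpTransform_apply, LinearMap.sum_apply] at h0
      rw [grpTransform_apply, LinearMap.sum_apply, map_sum, LinearMap.zero_apply, map_zero, ← h0]
      refine Finset.sum_congr rfl fun g _ => ?_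
      simp [he]
    funext g
    have := congrArg (fun a : MonoidAlgebra ℂ G => a.coeff g⁻¹) ha
    simpa [MonoidAlgebra.coeff_sum, MonoidAlgebra.coeff_single, Finsupp.single_apply, Finsupp.finsetSum_apply] using this
  have hsurj : Function.Surjective F := by
    intro T
    have := fun i => isSimple_of_irr (π i) (hirr i)
    obtain ⟨a, ha⟩ := density_family (A := MonoidAlgebra ℂ G) (fun i => (π i).asModule)
      (fun i j hij => ⟨fun e => hdisj i j hij ⟨(e.restrictScalars ℂ :
        (π i).asModule ≃ₗ[ℂ] (π j).asModule), fun g v => by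
          have := e.map_smul (MonoidAlgebra.of ℂ G g) ((π i).asModuleEquiv.symm v)
          rw [← Representation.asModuleEquiv_symm_map_rho] at this
          refine Eq.trans this ?_
          change (π j).asModuleEquiv (MonoidAlgebra.of ℂ G g • _) = _
          rw [Representation.asModuleEquiv_map_smul, Representation.asAlgebraHom_of]
          rfl⟩⟩) T
    refine ⟨fun g => a.coeff g⁻¹, funext fun i => ?_⟩
    rw [hFi, ← alg_eq_grpTransform]
    exact LinearMap.ext fun m => (ha i m).symm
  let p : ∀ i, Module.End ℂ (V i) := fun i => phiProj K Φ (π i)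
  have hH : ∀ f, InTwistedHecke K Φ f ↔ ∀ i, p i * F f i = F f i ∧ F f i * p i = F f i := by
    intro f
    rw [inTwisted_iff]
    simp only [p, ← phiProj_left_iff, ← phiProj_right_iff, hFi, ← grpTransform_left, ← grpTransform_right,
      ← map_smul]
    constructor
    · rintro ⟨h1, h2⟩ i
      exact ⟨fun k => by rw [h2], fun k => by rw [h1]⟩
    · intro h
      exact ⟨fun k => hinj (funext fun i => (h i).2 k), fun k => hinj (funext fun i => (h i).1 k)⟩
  have hconv : ∀ f f', F (conv f f') = F f' * F f := fun f f' =>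
    funext fun i => grpTransform_conv (π i) f f'
  have hidem : ∀ i, p i * p i = p i := fun i => phiProj_idem K Φ (π i)
  have hcen : ∀ h, h ∈ twistedHeckeCenter G K Φ ↔ ∀ i, ∃ c : ℂ, F h i = c • p i := by
    intro h
    change (InTwistedHecke K Φ h ∧ ∀ f, InTwistedHecke K Φ f → conv h f = conv f h) ↔ _
    constructor
    · rintro ⟨h1, h2⟩ i
      rw [hH] at h1
      refine corner_center (p i) (F h i) (hidem i) (h1 i).1 (h1 i).2 fun S hS1 hS2 => ?_
      obtain ⟨f, hf⟩ := hsurj (Pi.single i S)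
      have hfH : InTwistedHecke K Φ f := by
        rw [hH]
        intro j
        rw [hf]
        by_cases hj : j = i
        · subst hj; simp [hS1, hS2]
        · simp [hj]
      have e := congrArg F (h2 f hfH)
      rw [hconv, hconv, hf] at e
      have := congrFun e i
      simpa using this.symm
    · intro hc
      choose c hc using hc
      refine ⟨(hH h).2 fun i => ?_, fun f hf => hinj ?_⟩
      · rw [hc]; simp [hidem]
      · rw [hconv, hconv]
        funext i
        have := (hH f).1 hf i
        simp only [Pi.mul_apply, hc, mul_smul_comm, smul_mul_assoc, this.1, this.2]
  let Fe := LinearEquiv.ofBijective F ⟨hinj, hsurj⟩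
  let J := {i : I // ∃ v : V i, v ≠ 0 ∧ ∀ k : K, π i (k : G) v = (Φ k : ℂ) • v}
  have hpJ : ∀ i, p i ≠ 0 ↔ ∃ v : V i, v ≠ 0 ∧ ∀ k : K, π i (k : G) v = (Φ k : ℂ) • v :=
    fun i => phiProj_ne_zero_iff K Φ (π i)
  let Q : (J → ℂ) →ₗ[ℂ] (∀ i, Module.End ℂ (V i)) :=
    { toFun := fun c i => (if hi : _ then c ⟨i, hi⟩ else 0) • p i
      map_add' := by
        intro c d; funext i
        by_cases hi : ∃ v : V i, v ≠ 0 ∧ ∀ k : K, π i (k : G) v = (Φ k : ℂ) • v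
        · simp only [dif_pos hi, Pi.add_apply, add_smul]
        · simp only [dif_neg hi, Pi.add_apply, zero_smul, add_zero]
      map_smul' := by
        intro c d; funext i
        by_cases hi : ∃ v : V i, v ≠ 0 ∧ ∀ k : K, π i (k : G) v = (Φ k : ℂ) • v
        · simp only [dif_pos hi, Pi.smul_apply, smul_assoc, RingHom.id_apply]
        · simp only [dif_neg hi, Pi.smul_apply, zero_smul, smul_zero] }
  have hQ : ∀ c i, Q c i = (if hi : _ then c ⟨i, hi⟩ else 0) • p i := fun c i => rfl
  have hQinj : Function.Injective Q := by
    rw [injective_iff_map_eq_zero]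
    intro c hc
    funext ⟨i, hi⟩
    have := congrFun hc i
    rw [hQ, dif_pos hi] at this
    exact (smul_eq_zero.1 this).resolve_right ((hpJ i).2 hi)
  let Ψ : (J → ℂ) →ₗ[ℂ] (G → ℂ) := Fe.symm.toLinearMap.comp Q
  have hΨ : Function.Injective Ψ := Fe.symm.injective.comp hQinj
  have hFΨ : ∀ c, F (Ψ c) = Q c := fun c => Fe.apply_symm_apply (Q c)
  have hrange : LinearMap.range Ψ = twistedHeckeCenter G K Φ := by
    ext h
    rw [hcen, LinearMap.mem_range]
    constructor
    · rintro ⟨c, rfl⟩ i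
      exact ⟨_, by rw [hFΨ, hQ]⟩
    · intro hc
      choose c hc using hc
      refine ⟨fun j => c j.1, hinj ?_⟩
      rw [hFΨ]
      funext i
      rw [hQ, hc]
      by_cases hi : ∃ v : V i, v ≠ 0 ∧ ∀ k : K, π i (k : G) v = (Φ k : ℂ) • v
      · rw [dif_pos hi]
      · have : p i = 0 := by
          by_contra h0
          exact hi ((hpJ i).1 h0)
        rw [this, smul_zero, smul_zero]
  rw [← hrange, LinearMap.finrank_range_of_inj hΨ, Module.finrank_fintype_fun_eq_card,
    Nat.card_eq_fintype_card]
end
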